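/- In the decay setup, assume additionally that ‖v‖_b ≤ 2𝔠‖v₀‖. Then for every t ≥ 0: ‖v_t − V(t)v₀‖ ≤ 4Ĉ𝔠² ‖v₀‖² e^{−bt}; in particular sup_{t≥0} e^{bt} ‖v_t − V(t)v₀‖ ≤ 4Ĉ𝔠² ‖v₀‖², so the amplitude agrees with its linearization V(t)v₀ up to an error quadratic in ‖v₀‖. -/

import Mathlib

/-!
By the definition of `‖v‖_b`, `‖v_s‖ ≤ ‖v‖_b e^{-bs}`, hence `‖G(s)‖ ≤ K e^{-2bs}` with
`K = C_F ‖v‖_b² ≤ 4 C_F 𝔠² ‖v₀‖²`. The Duhamel integrand is therefore at most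
`𝔠 K e^{-bt} e^{-bs}`, so its integral is at most `(𝔠 / b) K e^{-bt}`, and the tail integral
`∫_t^∞ G` has norm at most `K e^{-2bt} / (2b) ≤ K e^{-bt} / (2b)`. Cauchy–Schwarz in each term of
the finite sum and the triangle inequality give the claim.
-/

open MeasureTheory
open scoped InnerProductSpace BigOperators

/-- Tail integral of a function decaying at rate `2b`. -/
lemma norm_tail_integral_le {H : Type*} [NormedAddCommGroup H] [NormedSpace ℝ H]
    {b K t : ℝ} (hb : 0 < b) (ht : 0 ≤ t) (hK : 0 ≤ K) {G : ℝ → H}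
    (hG : ∀ s, 0 ≤ s → ‖G s‖ ≤ K * Real.exp (-(2 * b) * s)) :
    ‖∫ s in Set.Ioi t, G s‖ ≤ K * Real.exp (-b * t) / (2 * b) := by
  have hneg : -(2 * b) < 0 := by linarith
  have h : ‖∫ s in Set.Ioi t, G s‖ ≤ ∫ s in Set.Ioi t, K * Real.exp (-(2 * b) * s) := by
    refine norm_integral_le_of_norm_le ((integrableOn_exp_mul_Ioi hneg t).const_mul K) ?_
    filter_upwards [ae_restrict_mem measurableSet_Ioi] with s hs
    exact hG s (ht.trans (le_of_lt hs))
  rw [integral_const_mul, integral_exp_mul_Ioi hneg, neg_div_neg_eq, ← mul_div_assoc] at h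
  refine h.trans ?_
  gcongr
  nlinarith

/-- The Duhamel integral of a function decaying at rate `2b` against operators decaying at
rate `b` decays at rate `b`. -/
lemma norm_duhamel_integral_le {H : Type*} [NormedAddCommGroup H] [NormedSpace ℝ H]
    {b c K t : ℝ} (hb : 0 < b) (ht : 0 ≤ t) (hc : 0 ≤ c) (hK : 0 ≤ K)
    {V : ℝ → H →L[ℝ] H} (hV : ∀ r, 0 ≤ r → ‖V r‖ ≤ c * Real.exp (-b * r)) {G : ℝ → H}
    (hG : ∀ s, 0 ≤ s → ‖G s‖ ≤ K * Real.exp (-(2 * b) * s)) :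
    ‖∫ s in (0:ℝ)..t, V (t - s) (G s)‖ ≤ c / b * (K * Real.exp (-b * t)) := by
  have hneg : -b < 0 := by linarith
  have hint := (integrableOn_exp_mul_Ioi hneg 0).const_mul (c * K * Real.exp (-b * t))
  rw [intervalIntegral.integral_of_le ht]
  calc ‖∫ s in Set.Ioc 0 t, V (t - s) (G s)‖
      ≤ ∫ s in Set.Ioc 0 t, c * K * Real.exp (-b * t) * Real.exp (-b * s) := by
        refine norm_integral_le_of_norm_le (IntegrableOn.mono_set hint Set.Ioc_subset_Ioi_self) ?_
        filter_upwards [ae_restrict_mem measurableSet_Ioc] with s hs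
        calc ‖V (t - s) (G s)‖ ≤ ‖V (t - s)‖ * ‖G s‖ := (V (t - s)).le_opNorm _
          _ ≤ (c * Real.exp (-b * (t - s))) * (K * Real.exp (-(2 * b) * s)) := by
            gcongr
            · exact hV _ (sub_nonneg.2 hs.2)
            · exact hG _ hs.1.le
          _ = c * K * (Real.exp (-b * (t - s)) * Real.exp (-(2 * b) * s)) := by ring
          _ = c * K * Real.exp (-b * t) * Real.exp (-b * s) := by
            rw [mul_assoc (c * K), ← Real.exp_add, ← Real.exp_add]
            ring_nf
    _ ≤ ∫ s in Set.Ioi 0, c * K * Real.exp (-b * t) * Real.exp (-b * s) := by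
        refine setIntegral_mono_set hint (ae_of_all _ fun s => ?_)
          Set.Ioc_subset_Ioi_self.eventuallyLE
        simp only [Pi.zero_apply]
        positivity
    _ = c / b * (K * Real.exp (-b * t)) := by
        rw [integral_const_mul, integral_exp_mul_Ioi hneg, neg_div_neg_eq, mul_zero, Real.exp_zero]
        ring

/-- In the decay setup, if additionally `‖v‖_b ≤ 2𝔠‖v₀‖`, then for every
`t ≥ 0`: `‖v_t - V(t)v₀‖ ≤ 4 Ĉ 𝔠² ‖v₀‖² e^{-bt}`; in particular
`sup_{t≥0} e^{bt} ‖v_t - V(t)v₀‖ ≤ 4 Ĉ 𝔠² ‖v₀‖²`, so the amplitude agrees with its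
linearization `V(t)v₀` up to an error quadratic in `‖v₀‖`. -/
theorem amplitude_linearization_error
    {H : Type*} [NormedAddCommGroup H] [InnerProductSpace ℝ H] [CompleteSpace H]
    {m : ℕ} (hm : 1 ≤ m)
    (b frakc CF : ℝ) (hb : 0 < b) (hfrakc : 1 ≤ frakc) (hCF : 0 < CF)
    (φ ψ : Fin m → H)
    (V : ℝ → H →L[ℝ] H)
    (hV : ∀ t : ℝ, 0 ≤ t → ‖V t‖ ≤ frakc * Real.exp (-b * t))
    (hVcont : ∀ x : H, ContinuousOn (fun t => V t x) (Set.Ici (0:ℝ)))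
    (v : ℝ → H) (hv : ContinuousOn v (Set.Ici (0:ℝ)))
    (nb : ℝ)
    (hnb : IsLUB {r : ℝ | ∃ t : ℝ, 0 ≤ t ∧ r = Real.exp (b * t) * ‖v t‖} nb)
    (G : ℝ → H)
    (hG : AEStronglyMeasurable G (volume.restrict (Set.Ici (0:ℝ))))
    (hGbound : ∀ s : ℝ, 0 ≤ s → ‖G s‖ ≤ CF * ‖v s‖ ^ 2)
    (heq : ∀ t : ℝ, 0 ≤ t →
      v t = V t (v 0) + (∫ s in (0:ℝ)..t, V (t - s) (G s))
        - ∑ i, ⟪ψ i, ∫ s in Set.Ioi t, G s⟫_ℝ • φ i)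
    (Ch : ℝ) (hCh : Ch = CF * (frakc / b + (1 / (2 * b)) * ∑ i, ‖φ i‖ * ‖ψ i‖))
    (hnb2 : nb ≤ 2 * frakc * ‖v 0‖) :
    ∀ t : ℝ, 0 ≤ t →
      ‖v t - V t (v 0)‖ ≤ 4 * Ch * frakc ^ 2 * ‖v 0‖ ^ 2 * Real.exp (-b * t) := by
  intro t ht
  have hvb : ∀ s, 0 ≤ s → Real.exp (b * s) * ‖v s‖ ≤ nb := fun s hs => hnb.1 ⟨s, hs, rfl⟩
  have hnb0 : 0 ≤ nb := le_trans (by positivity) (hvb 0 le_rfl)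
  have hc : 0 ≤ frakc := by linarith
  have hK : 0 ≤ CF * nb ^ 2 := by positivity
  have hGexp : ∀ s, 0 ≤ s → ‖G s‖ ≤ CF * nb ^ 2 * Real.exp (-(2 * b) * s) := by
    intro s hs
    have hvs : ‖v s‖ ≤ nb * Real.exp (-(b * s)) := by
      rw [Real.exp_neg, ← div_eq_mul_inv, le_div_iff₀ (Real.exp_pos _), mul_comm]
      exact hvb s hs
    calc ‖G s‖ ≤ CF * ‖v s‖ ^ 2 := hGbound s hs
      _ ≤ CF * (nb * Real.exp (-(b * s))) ^ 2 := by gcongr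
      _ = CF * nb ^ 2 * Real.exp (-(2 * b) * s) := by
        rw [mul_pow, ← Real.exp_nat_mul]
        push_cast
        ring_nf
  have hduh := norm_duhamel_integral_le hb ht hc hK hV hGexp
  have htail := norm_tail_integral_le hb ht hK hGexp
  have hsum : ‖∑ i, ⟪ψ i, ∫ s in Set.Ioi t, G s⟫_ℝ • φ i‖
      ≤ (∑ i, ‖φ i‖ * ‖ψ i‖) * (CF * nb ^ 2 * Real.exp (-b * t) / (2 * b)) := by
    rw [Finset.sum_mul]
    refine norm_sum_le_of_le _ fun i _ => ?_
    rw [norm_smul]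
    calc ‖⟪ψ i, ∫ s in Set.Ioi t, G s⟫_ℝ‖ * ‖φ i‖
        ≤ (‖ψ i‖ * (CF * nb ^ 2 * Real.exp (-b * t) / (2 * b))) * ‖φ i‖ := by
          gcongr
          exact (norm_inner_le_norm _ _).trans (by gcongr)
      _ = _ := by ring
  have hdiff : v t - V t (v 0) = (∫ s in (0:ℝ)..t, V (t - s) (G s))
      - ∑ i, ⟪ψ i, ∫ s in Set.Ioi t, G s⟫_ℝ • φ i := by
    rw [heq t ht]
    abel
  have hCh0 : 0 ≤ Ch := by
    rw [hCh]
    positivity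
  calc ‖v t - V t (v 0)‖
      ≤ frakc / b * (CF * nb ^ 2 * Real.exp (-b * t))
        + (∑ i, ‖φ i‖ * ‖ψ i‖) * (CF * nb ^ 2 * Real.exp (-b * t) / (2 * b)) := by
        rw [hdiff]
        exact (norm_sub_le _ _).trans (add_le_add hduh hsum)
    _ = Ch * nb ^ 2 * Real.exp (-b * t) := by
        rw [hCh]
        ring
    _ ≤ Ch * (2 * frakc * ‖v 0‖) ^ 2 * Real.exp (-b * t) := by gcongr
    _ = 4 * Ch * frakc ^ 2 * ‖v 0‖ ^ 2 * Real.exp (-b * t) := by ring
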